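/- Let λ have block structure k. The map φ from the set of faces of the Gelfand–Cetlin polytope P_λ to the set of faces of the ladder diagram Γ_k is a bijection, with inverse ψ given as follows: for a face γ of Γ_k, ψ(γ) is the set of points x ∈ P_λ such that x_{i,j} = x_{i,j+1} whenever ((i−1,j),(i,j)) is not an edge of γ, and x_{i,j} = x_{i+1,j} whenever ((i,j−1),(i,j)) is not an edge of γ. -/

import Mathlib

open Classical

noncomputable section

/-- Partial sums of the (0-indexed) sequence `k`: `nseq k i = k 0 + ⋯ + k (i-1)`;
so `nseq k i` is the paper's `n_i` for the sequence `(k_1, …, k_s) = (k 0, …, k (s-1))`. -/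
def nseq (k : ℕ → ℕ) (i : ℕ) : ℕ := ∑ j ∈ Finset.range i, k j

/-- The set of terminal vertices `T_k = {(n_i, n - n_i) : 0 ≤ i ≤ s}` of the ladder diagram. -/
def terminals (s : ℕ) (k : ℕ → ℕ) : Set (ℕ × ℕ) :=
  {v | ∃ i ≤ s, v = (nseq k i, nseq k s - nseq k i)}

/-- The vertex set of the ladder diagram `Γ_k`. -/
def ladderV (s : ℕ) (k : ℕ → ℕ) : Set (ℕ × ℕ) :=
  {v | ∃ t ∈ terminals s k, v.1 ≤ t.1 ∧ v.2 ≤ t.2}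

/-- A unit grid step: one step to the right or one step up. -/
def gridStep (v w : ℕ × ℕ) : Prop :=
  w = (v.1 + 1, v.2) ∨ w = (v.1, v.2 + 1)

/-- The edge set of the ladder diagram `Γ_k`. -/
def ladderE (s : ℕ) (k : ℕ → ℕ) : Set ((ℕ × ℕ) × (ℕ × ℕ)) :=
  {e | e.1 ∈ ladderV s k ∧ e.2 ∈ ladderV s k ∧ gridStep e.1 e.2}

/-- A combinatorial (directed) graph in the grid `ℤ_{≥0} × ℤ_{≥0}`,
given by a set of vertices and a set of edges. -/
@[ext] structure LGraph where
  V : Set (ℕ × ℕ)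
  E : Set ((ℕ × ℕ) × (ℕ × ℕ))

/-- Subgraph inclusion order on grid graphs. -/
instance : PartialOrder LGraph where
  le γ γ' := γ.V ⊆ γ'.V ∧ γ.E ⊆ γ'.E
  le_refl γ := ⟨subset_rfl, subset_rfl⟩
  le_trans a b c h h' := ⟨h.1.trans h'.1, h.2.trans h'.2⟩
  le_antisymm a b h h' := LGraph.ext (subset_antisymm h.1 h'.1) (subset_antisymm h.2 h'.2)

/-- The ladder diagram `Γ_k` as a grid graph. -/
def ladder (s : ℕ) (k : ℕ → ℕ) : LGraph :=
  ⟨ladderV s k, ladderE s k⟩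

/-- A positive path: (the graph of) a shortest path in the ladder diagram `Γ_k`
from the origin `(0,0)` to a terminal vertex. -/
def IsPositivePath (s : ℕ) (k : ℕ → ℕ) (p : LGraph) : Prop :=
  ∃ (m : ℕ) (f : ℕ → ℕ × ℕ),
    f 0 = (0, 0) ∧ f m ∈ terminals s k ∧
    (∀ i < m, gridStep (f i) (f (i + 1))) ∧
    (∀ i ≤ m, f i ∈ ladderV s k) ∧
    p.V = {v | ∃ i ≤ m, v = f i} ∧
    p.E = {e | ∃ i < m, e = (f i, f (i + 1))}

/-- A face of the ladder diagram `Γ_k`: a subgraph which contains all terminal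
vertices and is a union of positive paths. -/
def IsLadderFace (s : ℕ) (k : ℕ → ℕ) (γ : LGraph) : Prop :=
  terminals s k ⊆ γ.V ∧
  ∃ P : Set LGraph, (∀ p ∈ P, IsPositivePath s k p) ∧
    γ.V = ⋃ p ∈ P, LGraph.V p ∧ γ.E = ⋃ p ∈ P, LGraph.E p

/-- The dimension (first Betti number) of a face of a ladder diagram:
`|E(γ)| - |V(γ)| + 1`. -/
def ldim (γ : LGraph) : ℤ :=
  (γ.E.ncard : ℤ) - (γ.V.ncard : ℤ) + 1

/-- The index set `I = {(i,j) : i,j ≥ 1, i+j ≤ n}` of the coordinates of a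
Gelfand–Cetlin pattern. -/
def GCIdx (n : ℕ) : Set (ℕ × ℕ) := {p | 1 ≤ p.1 ∧ 1 ≤ p.2 ∧ p.1 + p.2 ≤ n}

/-- The entries of a Gelfand–Cetlin pattern `x`, extended by the boundary
condition `x_{i, n+1-i} = λ_i`. -/
def gcEntry (n : ℕ) (lam : ℕ → ℝ) (x : GCIdx n → ℝ) (p : ℕ × ℕ) : ℝ :=
  if h : p ∈ GCIdx n then x ⟨p, h⟩ else lam p.1

/-- The Gelfand–Cetlin polytope `P_λ`: the set of points `(x_{i,j})_{(i,j) ∈ I}`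
with `x_{i,j+1} ≥ x_{i,j} ≥ x_{i+1,j}` for all `(i,j) ∈ I`, where
`x_{i,n+1-i} = λ_i`. -/
def GCPoly (n : ℕ) (lam : ℕ → ℝ) : Set (GCIdx n → ℝ) :=
  {x | ∀ i j : ℕ, (i, j) ∈ GCIdx n →
    gcEntry n lam x (i, j) ≤ gcEntry n lam x (i, j + 1) ∧
    gcEntry n lam x (i + 1, j) ≤ gcEntry n lam x (i, j)}

/-- The subset of `P_λ` obtained by turning the inequalities
`x_{i,j+1} ≥ x_{i,j}` for `(i,j) ∈ SH` and `x_{i,j} ≥ x_{i+1,j}` for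
`(i,j) ∈ SV` into equalities. -/
def GCFaceOf (n : ℕ) (lam : ℕ → ℝ) (SH SV : Set (ℕ × ℕ)) : Set (GCIdx n → ℝ) :=
  {x | x ∈ GCPoly n lam ∧
    (∀ p ∈ SH, gcEntry n lam x (p.1, p.2 + 1) = gcEntry n lam x p) ∧
    (∀ p ∈ SV, gcEntry n lam x p = gcEntry n lam x (p.1 + 1, p.2))}

/-- A face of the GC polytope: a nonempty solution set of the system obtained
by replacing some of the defining inequalities by equalities. -/
def IsGCFace (n : ℕ) (lam : ℕ → ℝ) (F : Set (GCIdx n → ℝ)) : Prop :=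
  F.Nonempty ∧ ∃ SH SV : Set (ℕ × ℕ), SH ⊆ GCIdx n ∧ SV ⊆ GCIdx n ∧
    F = GCFaceOf n lam SH SV

/-- The dimension of (a face of) the GC polytope: the dimension of its affine span. -/
def GCdim (n : ℕ) (F : Set (GCIdx n → ℝ)) : ℕ :=
  Module.finrank ℝ (affineSpan ℝ F).direction

/-- `lam` (1-indexed) is weakly decreasing with block structure `k`: it is
constant on each block `(n_{i-1}, n_i]` and strictly decreases between
consecutive blocks. -/
def HasBlockStructure (s : ℕ) (k : ℕ → ℕ) (lam : ℕ → ℝ) : Prop :=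
  (∀ i < s, ∀ a b : ℕ, nseq k i < a → a ≤ b → b ≤ nseq k (i + 1) → lam a = lam b) ∧
  (∀ i : ℕ, 1 ≤ i → i < s → lam (nseq k i + 1) < lam (nseq k i))

/-- The edge set of the graph `φ(F)` associated to a subset `F` of the GC polytope. -/
def phiE (n : ℕ) (lam : ℕ → ℝ) (F : Set (GCIdx n → ℝ)) :
    Set ((ℕ × ℕ) × (ℕ × ℕ)) :=
  {e | (∃ i < n, e = ((0, i), (0, i + 1)) ∨ e = ((i, 0), (i + 1, 0))) ∨
    (∃ i j : ℕ, (i, j) ∈ GCIdx n ∧ e = ((i - 1, j), (i, j)) ∧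
      ∃ x ∈ F, gcEntry n lam x (i, j) < gcEntry n lam x (i, j + 1)) ∨
    (∃ i j : ℕ, (i, j) ∈ GCIdx n ∧ e = ((i, j - 1), (i, j)) ∧
      ∃ x ∈ F, gcEntry n lam x (i + 1, j) < gcEntry n lam x (i, j))}

/-- The graph `φ(F)`: its edges are given by `phiE` and its vertices are the
endpoints of its edges. -/
def phiGC (n : ℕ) (lam : ℕ → ℝ) (F : Set (GCIdx n → ℝ)) : LGraph where
  V := {v | ∃ e ∈ phiE n lam F, v = e.1 ∨ v = e.2}
  E := phiE n lam F

/-- The map `ψ`: for a subgraph `γ`, the set of points of `P_λ` where the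
inequalities corresponding to the missing edges of `γ` become equalities. -/
def psiGC (n : ℕ) (lam : ℕ → ℝ) (γ : LGraph) : Set (GCIdx n → ℝ) :=
  {x | x ∈ GCPoly n lam ∧ ∀ i j : ℕ, (i, j) ∈ GCIdx n →
    (((i - 1, j), (i, j)) ∉ γ.E → gcEntry n lam x (i, j) = gcEntry n lam x (i, j + 1)) ∧
    (((i, j - 1), (i, j)) ∉ γ.E → gcEntry n lam x (i, j) = gcEntry n lam x (i + 1, j))}
/-- The recursively defined point `x̄` of the proof of Lemma 2.6 (bijectivity):
`x̄_{i,j} = λ_i` if `i + j = n + 1`, and for `i + j ≤ n` it is determined from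
`x̄_{i,j+1}` and `x̄_{i+1,j}` according to which of the two edges
`((i-1,j),(i,j))`, `((i,j-1),(i,j))` belong to `E`. -/
def barX (n : ℕ) (lam : ℕ → ℝ) (E : Set ((ℕ × ℕ) × (ℕ × ℕ))) : ℕ → ℕ → ℝ
  | i, j =>
    if h1 : n + 1 ≤ i + j then lam i
    else if h2 : ((i - 1, j), (i, j)) ∈ E then
      if h3 : ((i, j - 1), (i, j)) ∈ E then
        (barX n lam E i (j + 1) + barX n lam E (i + 1) j) / 2
      else barX n lam E (i + 1) j
    else barX n lam E i (j + 1)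
  termination_by i j => n + 1 - (i + j)
  decreasing_by all_goals omega

/-- `α, β : ℕ → ℕ` encode an element
`w = ((α_1,β_1),…,(α_{s-1},β_{s-1})) ∈ W_{s-1}`, with the conventions
`α_0 = 0`, `β_0 = 1`, `α_s = 1`, `β_s = 0`. -/
def IsW (s : ℕ) (α β : ℕ → ℕ) : Prop :=
  (∀ i : ℕ, 1 ≤ i → i < s →
    (α i, β i) = (1, 0) ∨ (α i, β i) = (0, 1) ∨ (α i, β i) = (1, 1)) ∧
  α 0 = 0 ∧ β 0 = 1 ∧ α s = 1 ∧ β s = 0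

/-- The edge set of the subgraph `g_w` of `Γ_k`: the horizontal edge into the
terminal vertex `v_i` when `α_i = 1` and the vertical edge into `v_i` when
`β_i = 1`. -/
def gwE (s : ℕ) (k α β : ℕ → ℕ) : Set ((ℕ × ℕ) × (ℕ × ℕ)) :=
  {e | ∃ i ≤ s,
    (α i = 1 ∧
      e = ((nseq k i - 1, nseq k s - nseq k i), (nseq k i, nseq k s - nseq k i))) ∨
    (β i = 1 ∧
      e = ((nseq k i, nseq k s - nseq k i - 1), (nseq k i, nseq k s - nseq k i)))}

/-- The subgraph `g_w` of `Γ_k`. -/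
def gwGraph (s : ℕ) (k α β : ℕ → ℕ) : LGraph where
  V := {v | ∃ e ∈ gwE s k α β, v = e.1 ∨ v = e.2}
  E := gwE s k α β

/-- The interleaved sequence `r_w(k) * w̃` of length `2s - 1` (0-indexed):
entry `2j` is `k''_{j+1} = k_{j+1} + 1 - α_{j+1} - β_j` and entry `2j + 1` is
`w̃_{j+1} = α_{j+1} β_{j+1}`. -/
def rstar (s : ℕ) (k α β : ℕ → ℕ) (t : ℕ) : ℕ :=
  if t % 2 = 0 then k (t / 2) + 1 - α (t / 2 + 1) - β (t / 2)
  else α (t / 2 + 1) * β (t / 2 + 1)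

/-- `α`-value of one of the three symbols `(1,0), (0,1), (1,1)`,
encoded as `0, 1, 2 : Fin 3` respectively. -/
def aW3 (c : Fin 3) : ℕ := if c = 1 then 0 else 1

/-- `β`-value of one of the three symbols `(1,0), (0,1), (1,1)`,
encoded as `0, 1, 2 : Fin 3` respectively. -/
def bW3 (c : Fin 3) : ℕ := if c = 0 then 0 else 1

/-- The function `α` of the element of `W_{s-1}` encoded by
`c : Fin (s-1) → Fin 3` (with the conventions `α_0 = 0`, `α_s = 1`). -/
def alph (s : ℕ) (c : Fin (s - 1) → Fin 3) (i : ℕ) : ℕ :=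
  if i = 0 then 0 else if h : i - 1 < s - 1 then aW3 (c ⟨i - 1, h⟩) else 1

/-- The function `β` of the element of `W_{s-1}` encoded by
`c : Fin (s-1) → Fin 3` (with the conventions `β_0 = 1`, `β_s = 0`). -/
def bet (s : ℕ) (c : Fin (s - 1) → Fin 3) (i : ℕ) : ℕ :=
  if i = 0 then 1 else if h : i - 1 < s - 1 then bW3 (c ⟨i - 1, h⟩) else 0

/-- The interleaved sequence `r_w(k) * w̃` (of length `2s - 1`, 0-indexed) for
the element `w ∈ W_{s-1}` encoded by `c`. -/
def newk (s : ℕ) (c : Fin (s - 1) → Fin 3) (k : ℕ → ℕ) (t : ℕ) : ℕ :=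
  if t % 2 = 0 then k (t / 2) + 1 - alph s c (t / 2 + 1) - bet s c (t / 2)
  else alph s c (t / 2 + 1) * bet s c (t / 2 + 1)

/-- `|w| = Σ_{i=1}^{s-1} α_i β_i` for the element `w ∈ W_{s-1}` encoded by `c`. -/
def wsize (s : ℕ) (c : Fin (s - 1) → Fin 3) : ℕ :=
  ∑ j ∈ Finset.range (s - 1), alph s c (j + 1) * bet s c (j + 1)

/-- The subgraph `g_w` of `Γ_k` for the element `w ∈ W_{s-1}` encoded by `c`. -/
def gwGraph3 (s : ℕ) (k : ℕ → ℕ) (c : Fin (s - 1) → Fin 3) : LGraph :=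
  gwGraph s k (alph s c) (bet s c)

/-- Union of two grid graphs (union of vertex sets and of edge sets). -/
def ugraph (γ δ : LGraph) : LGraph := ⟨γ.V ∪ δ.V, γ.E ∪ δ.E⟩

/-- The generating function `F_k(t) = Σ_{γ face of Γ_k} t^{dim γ}` of the
`f`-vector of the ladder diagram `Γ_k`, as a formal power series in `t`:
the coefficient of `t^d` is the number of faces of `Γ_k` of dimension `d`. -/
def fpol (s : ℕ) (k : ℕ → ℕ) : PowerSeries ℤ :=
  PowerSeries.mk fun d =>
    (Set.ncard {γ : LGraph | IsLadderFace s k γ ∧ ldim γ = (d : ℤ)} : ℤ)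

/-- The operator `Π_{i=1}^{s-1} (∂/∂x_i + ∂/∂x_{i+1} + t ∂/∂y_i)` applied to a
polynomial in the variables `x_1, x_2, … , y_1, y_2, …` (the variable `x_{i+1}`
is `Sum.inl i` and `y_{i+1}` is `Sum.inr i`) over `ℚ[t]`. -/
def Lfold (s : ℕ) (f : MvPolynomial (ℕ ⊕ ℕ) (Polynomial ℚ)) :
    MvPolynomial (ℕ ⊕ ℕ) (Polynomial ℚ) :=
  (List.range (s - 1)).foldl
    (fun g i =>
      MvPolynomial.pderiv (Sum.inl i) g + MvPolynomial.pderiv (Sum.inl (i + 1)) g +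
        (Polynomial.X : Polynomial ℚ) • MvPolynomial.pderiv (Sum.inr i) g) f

/-- The operator `D_w = Π_{i=1}^{s-1} (∂/∂x_i)^{1-α_i} (∂/∂x_{i+1})^{1-β_i}
(t ∂/∂y_i)^{α_i β_i}` for the element `w ∈ W_{s-1}` encoded by
`c : Fin (s-1) → Fin 3` (`0 ↦ (1,0)`, `1 ↦ (0,1)`, `2 ↦ (1,1)`). -/
def DfoldC (s : ℕ) (c : Fin (s - 1) → Fin 3)
    (f : MvPolynomial (ℕ ⊕ ℕ) (Polynomial ℚ)) : MvPolynomial (ℕ ⊕ ℕ) (Polynomial ℚ) :=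
  (List.finRange (s - 1)).foldl
    (fun g i =>
      if c i = 0 then MvPolynomial.pderiv (Sum.inl ((i : ℕ) + 1)) g
      else if c i = 1 then MvPolynomial.pderiv (Sum.inl (i : ℕ)) g
      else (Polynomial.X : Polynomial ℚ) • MvPolynomial.pderiv (Sum.inr (i : ℕ)) g) f

/-- The operator `D_w` for the element `w ∈ W_{s-1}` encoded by `α, β : ℕ → ℕ`. -/
def DfoldW (s : ℕ) (α β : ℕ → ℕ)
    (f : MvPolynomial (ℕ ⊕ ℕ) (Polynomial ℚ)) : MvPolynomial (ℕ ⊕ ℕ) (Polynomial ℚ) :=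
  (List.range (s - 1)).foldl
    (fun g j =>
      if α (j + 1) = 1 ∧ β (j + 1) = 1 then
        (Polynomial.X : Polynomial ℚ) • MvPolynomial.pderiv (Sum.inr j) g
      else if α (j + 1) = 1 then MvPolynomial.pderiv (Sum.inl (j + 1)) g
      else MvPolynomial.pderiv (Sum.inl j) g) f

/-- Substitution of `0` for all the variables `y_j = Sum.inr j`. -/
def setYzero :
    MvPolynomial (ℕ ⊕ ℕ) (Polynomial ℚ) →ₐ[Polynomial ℚ] MvPolynomial (ℕ ⊕ ℕ) (Polynomial ℚ) :=
  MvPolynomial.aeval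
    (Sum.elim (fun i => MvPolynomial.X (Sum.inl i)) fun _ => (0 : MvPolynomial (ℕ ⊕ ℕ) (Polynomial ℚ)))
end

/-!
A set of grid edges is the edge set of a face of `Γ_k` if and only if it is *balanced*: below the
antidiagonal `a + b = n` a vertex other than the origin is entered exactly when it is left, and on
the antidiagonal the vertices entered are exactly the terminal ones.

For a point `x` of `P_λ`, put the edges of the strict inequalities `x_{i,j} < x_{i,j+1}` and
`x_{i+1,j} < x_{i,j}` into the vertex `(i,j)`. Since `x_{i+1,j} ≤ x_{i,j} ≤ x_{i,j+1}` and
`x_{i+1,j} ≤ x_{i+1,j+1} ≤ x_{i,j+1}`, the vertex is entered if and only if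
`x_{i+1,j} < x_{i,j+1}`, and if and only if it is left: strict inequalities give balanced edge sets.
Conversely the point `x̄`, filled in antidiagonal by antidiagonal starting from `λ`, is strict along
exactly the edges of a given balanced set. As `ψ(γ)` consists of the points that are strict along
edges of `γ` only, `φ` and `ψ` are mutually inverse.
-/

/-! ### Grid edges and paths -/

/-- An oriented edge of the grid `ℤ_{≥0} × ℤ_{≥0}`, encoded by its source and its target. -/
abbrev GridEdge := (ℕ × ℕ) × (ℕ × ℕ)

theorem gridStep.add_eq {v w : ℕ × ℕ} (h : gridStep v w) : w.1 + w.2 = v.1 + v.2 + 1 := by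
  rcases h with rfl | rfl <;> simp only <;> omega

theorem gridStep.le {v w : ℕ × ℕ} (h : gridStep v w) : v ≤ w := by
  rcases h with rfl | rfl <;> simp [Prod.le_def]

theorem exists_edge_into_iff {E : Set GridEdge} (hE : ∀ e ∈ E, gridStep e.1 e.2) {a b : ℕ} :
    (∃ u, (u, (a + 1, b + 1)) ∈ E) ↔
      ((a, b + 1), (a + 1, b + 1)) ∈ E ∨ ((a + 1, b), (a + 1, b + 1)) ∈ E := by
  refine ⟨?_, fun h => h.elim (⟨_, ·⟩) (⟨_, ·⟩)⟩
  rintro ⟨⟨c, d⟩, he⟩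
  have hstep := hE _ he
  simp only [gridStep, Prod.mk.injEq, Nat.add_right_cancel_iff] at hstep
  rcases hstep with ⟨rfl, rfl⟩ | ⟨rfl, rfl⟩
  exacts [Or.inl he, Or.inr he]

theorem exists_edge_out_iff {E : Set GridEdge} (hE : ∀ e ∈ E, gridStep e.1 e.2) {a b : ℕ} :
    (∃ w, ((a, b), w) ∈ E) ↔ ((a, b), (a + 1, b)) ∈ E ∨ ((a, b), (a, b + 1)) ∈ E := by
  refine ⟨?_, fun h => h.elim (⟨_, ·⟩) (⟨_, ·⟩)⟩
  rintro ⟨w, he⟩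
  obtain rfl | rfl : gridStep (a, b) w := hE _ he
  exacts [Or.inl he, Or.inr he]

/-- The vertices incident to a set of edges. -/
def endpoints (E : Set GridEdge) : Set (ℕ × ℕ) :=
  {v | ∃ e ∈ E, v = e.1 ∨ v = e.2}

theorem endpoints_biUnion {ι : Type*} (P : Set ι) (E : ι → Set GridEdge) :
    endpoints (⋃ p ∈ P, E p) = ⋃ p ∈ P, endpoints (E p) := by
  ext v
  constructor
  · rintro ⟨e, he, hv⟩
    obtain ⟨p, hp, hep⟩ := Set.mem_iUnion₂.1 he
    exact Set.mem_iUnion₂.2 ⟨p, hp, e, hep, hv⟩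
  · intro hv
    obtain ⟨p, hp, e, he, hev⟩ := Set.mem_iUnion₂.1 hv
    exact ⟨e, Set.mem_iUnion₂.2 ⟨p, hp, he⟩, hev⟩

/-- `f 0, …, f n` is a directed path in the grid starting at the origin. -/
structure IsGridPath (n : ℕ) (f : ℕ → ℕ × ℕ) : Prop where
  zero : f 0 = (0, 0)
  step : ∀ i < n, gridStep (f i) (f (i + 1))

theorem IsGridPath.add_eq {n : ℕ} {f : ℕ → ℕ × ℕ} (hf : IsGridPath n f) {i : ℕ} (hi : i ≤ n) :
    (f i).1 + (f i).2 = i := by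
  induction i with
  | zero => simp [hf.zero]
  | succ i ih => rw [(hf.step i hi).add_eq, ih (by omega)]

theorem IsGridPath.le_last {n : ℕ} {f : ℕ → ℕ × ℕ} (hf : IsGridPath n f) {i : ℕ} (hi : i ≤ n) :
    f i ≤ f n :=
  monotoneOn_of_le_succ Set.ordConnected_Iic (fun j _ _ hj => (hf.step j hj).le) hi
    (Set.mem_Iic.2 le_rfl) hi

/-- The graph formed by the vertices `f 0, …, f n` and the edges between consecutive ones. -/
def pathGraph (n : ℕ) (f : ℕ → ℕ × ℕ) : LGraph where
  V := {v | ∃ i ≤ n, v = f i}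
  E := {e | ∃ i < n, e = (f i, f (i + 1))}

theorem endpoints_pathGraph {n : ℕ} (hn : 0 < n) (f : ℕ → ℕ × ℕ) :
    endpoints (pathGraph n f).E = (pathGraph n f).V := by
  ext v
  constructor
  · rintro ⟨_, ⟨i, hi, rfl⟩, rfl | rfl⟩
    exacts [⟨i, hi.le, rfl⟩, ⟨i + 1, hi, rfl⟩]
  · rintro ⟨i | i, hi, rfl⟩
    exacts [⟨_, ⟨0, hn, rfl⟩, Or.inl rfl⟩, ⟨_, ⟨i, hi, rfl⟩, Or.inr rfl⟩]

theorem exists_chain_of_rank {α : Type*} {p : α → Prop} {R : α → α → Prop} {rank : α → ℕ}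
    (hR : ∀ v, p v → 0 < rank v → ∃ w, p w ∧ R v w ∧ rank v = rank w + 1) {v : α} (hv : p v) :
    ∃ f : ℕ → α, f 0 = v ∧ rank (f (rank v)) = 0 ∧ ∀ i < rank v, R (f i) (f (i + 1)) := by
  induction hr : rank v generalizing v with
  | zero => exact ⟨fun _ => v, rfl, hr, by simp⟩
  | succ r ih =>
    obtain ⟨w, hw, hvw, hrank⟩ := hR v hv (by omega)
    obtain ⟨f, rfl, hlast, hf⟩ := ih hw (by omega)
    refine ⟨fun i => Nat.casesOn i v f, rfl, hlast, ?_⟩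
    rintro (_ | i) hi
    exacts [hvw, hf i (by omega)]

/-! ### Ladder faces as balanced edge sets -/

/-- The local description of the edge sets of ladder faces: `n` is the height of the antidiagonal
on which paths end and `T` is the set of allowed end points. -/
structure IsBalanced (n : ℕ) (T : Set (ℕ × ℕ)) (E : Set GridEdge) : Prop where
  step : ∀ e ∈ E, gridStep e.1 e.2
  le : ∀ e ∈ E, e.2.1 + e.2.2 ≤ n
  in_iff_out : ∀ v : ℕ × ℕ, 0 < v.1 + v.2 → v.1 + v.2 < n →
    ((∃ u, (u, v) ∈ E) ↔ ∃ w, (v, w) ∈ E)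
  in_iff_mem : ∀ v : ℕ × ℕ, v.1 + v.2 = n → ((∃ u, (u, v) ∈ E) ↔ v ∈ T)

namespace IsBalanced

variable {n : ℕ} {T : Set (ℕ × ℕ)} {E : Set GridEdge} {v : ℕ × ℕ}

theorem add_lt (hE : IsBalanced n T E) {e : GridEdge} (he : e ∈ E) : e.1.1 + e.1.2 < n := by
  have hadd := (hE.step e he).add_eq
  have hle := hE.le e he
  omega

theorem exists_in (hE : IsBalanced n T E) (hv : v ∈ endpoints E) (hpos : 0 < v.1 + v.2) :
    ∃ u, (u, v) ∈ E := by
  obtain ⟨e, he, rfl | rfl⟩ := hv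
  exacts [(hE.in_iff_out _ hpos (hE.add_lt he)).2 ⟨e.2, he⟩, ⟨e.1, he⟩]

theorem exists_out (hE : IsBalanced n T E) (hv : v ∈ endpoints E) (hlt : v.1 + v.2 < n) :
    ∃ w, (v, w) ∈ E := by
  obtain ⟨e, he, rfl | rfl⟩ := hv
  · exact ⟨e.2, he⟩
  · have hadd := (hE.step e he).add_eq
    exact (hE.in_iff_out _ (by omega) hlt).1 ⟨e.1, he⟩

theorem exists_chain_to_origin (hE : IsBalanced n T E) (hv : v ∈ endpoints E) :
    ∃ f : ℕ → ℕ × ℕ, f 0 = v ∧ f (v.1 + v.2) = (0, 0) ∧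
      ∀ i < v.1 + v.2, (f (i + 1), f i) ∈ E := by
  obtain ⟨f, h0, hlast, hf⟩ := exists_chain_of_rank (p := (· ∈ endpoints E))
    (R := fun v u => (u, v) ∈ E) (rank := fun v => v.1 + v.2)
    (fun v hv hpos => by
      obtain ⟨u, hu⟩ := hE.exists_in hv hpos
      exact ⟨u, ⟨_, hu, Or.inl rfl⟩, hu, (hE.step _ hu).add_eq⟩) hv
  exact ⟨f, h0, Prod.ext (by omega) (by omega), hf⟩

theorem exists_chain_to_antidiagonal (hE : IsBalanced n T E) (hv : v ∈ endpoints E) :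
    ∃ f : ℕ → ℕ × ℕ, f 0 = v ∧ ∀ i < n - (v.1 + v.2), (f i, f (i + 1)) ∈ E := by
  obtain ⟨f, h0, -, hf⟩ := exists_chain_of_rank (p := (· ∈ endpoints E))
    (R := fun v w => (v, w) ∈ E) (rank := fun v => n - (v.1 + v.2))
    (fun v hv hpos => by
      obtain ⟨w, hw⟩ := hE.exists_out hv (by omega)
      have hadd : w.1 + w.2 = v.1 + v.2 + 1 := (hE.step _ hw).add_eq
      exact ⟨w, ⟨_, hw, Or.inr rfl⟩, hw, by omega⟩) hv
  exact ⟨f, h0, hf⟩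

theorem exists_path_through (hE : IsBalanced n T E) {e : GridEdge} (he : e ∈ E) :
    ∃ f, IsGridPath n f ∧ f n ∈ T ∧ (pathGraph n f).E ⊆ E ∧ e ∈ (pathGraph n f).E := by
  obtain ⟨u, v⟩ := e
  have hadd : v.1 + v.2 = u.1 + u.2 + 1 := (hE.step _ he).add_eq
  have hlt : u.1 + u.2 < n := hE.add_lt he
  obtain ⟨b, hbu, hb0, hb⟩ := hE.exists_chain_to_origin ⟨_, he, Or.inl rfl⟩
  obtain ⟨g, hgv, hg⟩ := hE.exists_chain_to_antidiagonal (v := v) ⟨_, he, Or.inr rfl⟩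
  set l := u.1 + u.2
  let f : ℕ → ℕ × ℕ := fun i => if i ≤ l then b (l - i) else g (i - (l + 1))
  have f_le (i : ℕ) (hi : i ≤ l) : f i = b (l - i) := if_pos hi
  have f_gt (i : ℕ) (hi : l < i) : f i = g (i - (l + 1)) := if_neg (by omega)
  have hfe : (f l, f (l + 1)) = (u, v) := by
    rw [f_le l le_rfl, f_gt (l + 1) (by omega), Nat.sub_self, Nat.sub_self, hbu, hgv]
  have hfE : ∀ i < n, (f i, f (i + 1)) ∈ E := by
    intro i hi
    rcases lt_trichotomy i l with hil | rfl | hil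
    · have hbi := hb (l - (i + 1)) (by omega)
      rwa [show l - (i + 1) + 1 = l - i by omega, ← f_le i (by omega), ← f_le (i + 1) hil] at hbi
    · rwa [hfe]
    · have hgi := hg (i - (l + 1)) (by omega)
      rwa [show i - (l + 1) + 1 = i + 1 - (l + 1) by omega, ← f_gt i hil,
        ← f_gt (i + 1) (by omega)] at hgi
  have hf : IsGridPath n f :=
    ⟨by rw [f_le 0 (by omega), Nat.sub_zero, hb0], fun i hi => hE.step _ (hfE i hi)⟩
  refine ⟨f, hf, ?_, ?_, l, hlt, hfe.symm⟩
  · obtain ⟨m, rfl⟩ : ∃ m, n = m + 1 := ⟨n - 1, by omega⟩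
    exact (hE.in_iff_mem _ (hf.add_eq le_rfl)).1 ⟨f m, hfE m (by omega)⟩
  · rintro _ ⟨i, hi, rfl⟩
    exact hfE i hi

theorem mem_of_unique_step (hE : IsBalanced n T E) {c : ℕ → ℕ × ℕ}
    (hc : ∀ i u, gridStep u (c (i + 1)) → u = c i) (hadd : ∀ i, (c i).1 + (c i).2 = i)
    (hT : c n ∈ T) {i : ℕ} (hi : i < n) : (c i, c (i + 1)) ∈ E := by
  have hin : ∃ u, (u, c (i + 1)) ∈ E := by
    obtain rfl | hlt : i + 1 = n ∨ i + 1 < n := by omega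
    · exact (hE.in_iff_mem _ (hadd _)).2 hT
    · exact (hE.in_iff_out _ (by rw [hadd]; omega) (by rwa [hadd])).2
        ⟨_, hE.mem_of_unique_step hc hadd hT hlt⟩
  obtain ⟨u, hu⟩ := hin
  rwa [hc i u (hE.step _ hu)] at hu
termination_by n - i

end IsBalanced

section LadderFace

variable {s : ℕ} {k : ℕ → ℕ}

theorem monotone_nseq (k : ℕ → ℕ) : Monotone (nseq k) :=
  monotone_nat_of_le_succ fun i => by simp [nseq, Finset.sum_range_succ]

theorem nseq_pos (hs : 1 ≤ s) (hk : ∀ i < s, 0 < k i) : 0 < nseq k s :=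
  Finset.sum_pos (fun i hi => hk i (Finset.mem_range.1 hi)) (Finset.nonempty_range_iff.2 (by omega))

theorem mem_terminals_iff {v : ℕ × ℕ} :
    v ∈ terminals s k ↔ v.1 + v.2 = nseq k s ∧ ∃ t ≤ s, nseq k t = v.1 := by
  constructor
  · rintro ⟨t, ht, rfl⟩
    exact ⟨Nat.add_sub_cancel' (monotone_nseq k ht), t, ht, rfl⟩
  · rintro ⟨hadd, t, ht, hv⟩
    exact ⟨t, ht, Prod.ext hv.symm (by simp only; omega)⟩

/-- A positive path has length exactly `n`, and its vertices lie in `Γ_k` automatically. -/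
theorem isPositivePath_iff {p : LGraph} :
    IsPositivePath s k p ↔ ∃ f, IsGridPath (nseq k s) f ∧ f (nseq k s) ∈ terminals s k ∧
      p = pathGraph (nseq k s) f := by
  constructor
  · rintro ⟨m, f, h0, hm, hstep, -, hV, hE⟩
    have hf : IsGridPath m f := ⟨h0, hstep⟩
    obtain rfl : m = nseq k s := (hf.add_eq le_rfl).symm.trans (mem_terminals_iff.1 hm).1
    exact ⟨f, hf, hm, LGraph.ext hV hE⟩
  · rintro ⟨f, hf, hlast, rfl⟩
    exact ⟨nseq k s, f, hf.zero, hlast, hf.step, fun i hi => ⟨_, hlast, hf.le_last hi⟩, rfl, rfl⟩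

namespace IsLadderFace

variable {γ : LGraph}

theorem V_eq_endpoints (hn : 0 < nseq k s) (hγ : IsLadderFace s k γ) : γ.V = endpoints γ.E := by
  obtain ⟨-, P, hP, hV, hE⟩ := hγ
  rw [hV, hE, endpoints_biUnion]
  refine Set.iUnion₂_congr fun p hp => ?_
  obtain ⟨f, -, -, rfl⟩ := isPositivePath_iff.1 (hP p hp)
  exact (endpoints_pathGraph hn f).symm

theorem exists_path_through (hγ : IsLadderFace s k γ) {e : GridEdge} (he : e ∈ γ.E) :
    ∃ f, IsGridPath (nseq k s) f ∧ f (nseq k s) ∈ terminals s k ∧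
      (pathGraph (nseq k s) f).E ⊆ γ.E ∧ e ∈ (pathGraph (nseq k s) f).E := by
  obtain ⟨-, P, hP, -, hE⟩ := hγ
  rw [hE] at he ⊢
  obtain ⟨p, hp, hep⟩ := Set.mem_iUnion₂.1 he
  obtain ⟨f, hf, hlast, rfl⟩ := isPositivePath_iff.1 (hP p hp)
  exact ⟨f, hf, hlast, Set.subset_biUnion_of_mem (u := LGraph.E) hp, hep⟩

theorem isBalanced (hn : 0 < nseq k s) (hγ : IsLadderFace s k γ) :
    IsBalanced (nseq k s) (terminals s k) γ.E where
  step e he := by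
    obtain ⟨f, hf, -, -, i, hi, rfl⟩ := hγ.exists_path_through he
    exact hf.step i hi
  le e he := by
    obtain ⟨f, hf, -, -, i, hi, rfl⟩ := hγ.exists_path_through he
    exact (hf.add_eq hi).trans_le hi
  in_iff_out v hpos hlt := by
    constructor
    · rintro ⟨u, hu⟩
      obtain ⟨f, hf, -, hfE, i, hi, hef⟩ := hγ.exists_path_through hu
      obtain ⟨rfl, rfl⟩ := Prod.mk.inj hef
      rw [hf.add_eq hi] at hlt
      exact ⟨f (i + 2), hfE ⟨i + 1, hlt, rfl⟩⟩
    · rintro ⟨w, hw⟩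
      obtain ⟨f, hf, -, hfE, i, hi, hef⟩ := hγ.exists_path_through hw
      obtain ⟨rfl, rfl⟩ := Prod.mk.inj hef
      rw [hf.add_eq hi.le] at hpos
      obtain ⟨j, rfl⟩ := Nat.exists_eq_succ_of_ne_zero hpos.ne'
      exact ⟨f j, hfE ⟨j, by omega, rfl⟩⟩
  in_iff_mem v hv := by
    constructor
    · rintro ⟨u, hu⟩
      obtain ⟨f, hf, hlast, -, i, hi, hef⟩ := hγ.exists_path_through hu
      obtain ⟨rfl, rfl⟩ := Prod.mk.inj hef
      have hin : i + 1 = nseq k s := (hf.add_eq hi).symm.trans hv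
      rwa [hin]
    · intro hT
      have hvV := hγ.1 hT
      rw [hγ.V_eq_endpoints hn] at hvV
      obtain ⟨e, he, rfl | rfl⟩ := hvV
      · obtain ⟨f, hf, -, -, i, hi, rfl⟩ := hγ.exists_path_through he
        exact absurd (hv.symm.trans (hf.add_eq hi.le)) hi.ne'
      · exact ⟨e.1, he⟩

end IsLadderFace

theorem IsBalanced.isLadderFace (hn : 0 < nseq k s) {E : Set GridEdge}
    (hE : IsBalanced (nseq k s) (terminals s k) E) : IsLadderFace s k ⟨endpoints E, E⟩ := by
  let P : Set LGraph := {p | IsPositivePath s k p ∧ p.E ⊆ E}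
  have hPE : E = ⋃ p ∈ P, p.E := by
    refine subset_antisymm (fun e he => ?_) (Set.iUnion₂_subset fun p hp => hp.2)
    obtain ⟨f, hf, hlast, hfE, hef⟩ := hE.exists_path_through he
    exact Set.mem_iUnion₂.2 ⟨_, ⟨isPositivePath_iff.2 ⟨f, hf, hlast, rfl⟩, hfE⟩, hef⟩
  have hPV : endpoints E = ⋃ p ∈ P, p.V := by
    conv_lhs => rw [hPE, endpoints_biUnion]
    refine Set.iUnion₂_congr fun p hp => ?_
    obtain ⟨f, -, -, rfl⟩ := isPositivePath_iff.1 hp.1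
    exact endpoints_pathGraph hn f
  refine ⟨fun v hv => ?_, P, fun p hp => hp.1, hPV, hPE⟩
  obtain ⟨u, hu⟩ := (hE.in_iff_mem v (mem_terminals_iff.1 hv).1).2 hv
  exact ⟨(u, v), hu, Or.inr rfl⟩

theorem isLadderFace_iff (hn : 0 < nseq k s) {γ : LGraph} :
    IsLadderFace s k γ ↔ γ.V = endpoints γ.E ∧ IsBalanced (nseq k s) (terminals s k) γ.E := by
  refine ⟨fun hγ => ⟨hγ.V_eq_endpoints hn, hγ.isBalanced hn⟩, ?_⟩
  obtain ⟨V, E⟩ := γ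
  rintro ⟨hV, hE⟩
  obtain rfl : V = endpoints E := hV
  exact hE.isLadderFace hn

end LadderFace

/-! ### Descents of the boundary values -/

/-- The vertices of the antidiagonal `a + b = n` at which `lam` drops, together with the two
vertices on the axes. For `lam` of block structure `k` this is the terminal set `T_k`, but it makes
sense for every boundary sequence. -/
def descents (n : ℕ) (lam : ℕ → ℝ) : Set (ℕ × ℕ) :=
  {v | v.1 + v.2 = n ∧ (v.1 = 0 ∨ v.2 = 0 ∨ lam (v.1 + 1) < lam v.1)}

section BlockStructure

variable {s : ℕ} {k : ℕ → ℕ} {lam : ℕ → ℝ}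

theorem exists_nseq_le_lt_nseq_succ (k : ℕ → ℕ) {s i : ℕ} (hi : i < nseq k s) :
    ∃ t < s, nseq k t ≤ i ∧ i < nseq k (t + 1) := by
  induction s with
  | zero => simp [nseq] at hi
  | succ s ih =>
    rcases lt_or_ge i (nseq k s) with hlt | hge
    · obtain ⟨t, ht, hti⟩ := ih hlt
      exact ⟨t, ht.trans (Nat.lt_succ_self s), hti⟩
    · exact ⟨s, Nat.lt_succ_self s, hge, hi⟩

namespace HasBlockStructure

theorem succ_le_and_succ_lt_iff (hlam : HasBlockStructure s k lam) {i : ℕ} (hi : 1 ≤ i)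
    (hin : i < nseq k s) :
    lam (i + 1) ≤ lam i ∧ (lam (i + 1) < lam i ↔ ∃ t ≤ s, nseq k t = i) := by
  obtain ⟨t, ht, hti, hit⟩ := exists_nseq_le_lt_nseq_succ k hin
  rcases hti.eq_or_lt with rfl | hti
  · have ht0 : t ≠ 0 := by
      rintro rfl
      simp [nseq] at hi
    have hdrop := hlam.2 t (Nat.one_le_iff_ne_zero.2 ht0) ht
    exact ⟨hdrop.le, fun _ => ⟨t, ht.le, rfl⟩, fun _ => hdrop⟩
  · have hconst := hlam.1 t ht i (i + 1) hti (Nat.le_succ i) hit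
    refine ⟨hconst.ge, fun hlt => absurd hconst hlt.ne', ?_⟩
    rintro ⟨r, -, rfl⟩
    have htr := (monotone_nseq k).reflect_lt hti
    have hrt := (monotone_nseq k).reflect_lt hit
    omega

theorem antitoneOn (hlam : HasBlockStructure s k lam) :
    AntitoneOn lam (Set.Icc 1 (nseq k s)) :=
  antitoneOn_of_succ_le Set.ordConnected_Icc fun _ _ hi hi' =>
    (hlam.succ_le_and_succ_lt_iff hi.1 hi'.2).1

theorem terminals_eq_descents (hlam : HasBlockStructure s k lam) :
    terminals s k = descents (nseq k s) lam := by
  ext ⟨i, j⟩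
  rw [mem_terminals_iff]
  refine and_congr_right fun hij => ?_
  simp only at hij ⊢
  rcases Nat.eq_zero_or_pos i with rfl | hi
  · exact iff_of_true ⟨0, Nat.zero_le s, rfl⟩ (Or.inl rfl)
  rcases Nat.eq_zero_or_pos j with rfl | hj
  · exact iff_of_true ⟨s, le_rfl, hij.symm⟩ (Or.inr (Or.inl rfl))
  rw [or_iff_right hi.ne', or_iff_right hj.ne',
    (hlam.succ_le_and_succ_lt_iff hi (by omega)).2]

end HasBlockStructure

end BlockStructure

/-! ### Strict inequalities of Gelfand–Cetlin patterns -/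

theorem forall_mem_GCIdx_iff {n : ℕ} {p : ℕ → ℕ → Prop} :
    (∀ i j, (i, j) ∈ GCIdx n → p i j) ↔ ∀ a b, a + b + 2 ≤ n → p (a + 1) (b + 1) := by
  constructor
  · intro h a b hab
    exact h _ _ ⟨by simp, by simp, by simp only; omega⟩
  · rintro h (_ | a) (_ | b) ⟨hi, hj, hij⟩
    any_goals simp at hi hj
    exact h a b (by simp only at hij; omega)

theorem exists_mem_GCIdx_iff {n : ℕ} {p : ℕ → ℕ → Prop} :
    (∃ i j, (i, j) ∈ GCIdx n ∧ p i j) ↔ ∃ a b, a + b + 2 ≤ n ∧ p (a + 1) (b + 1) := by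
  simpa only [not_forall, exists_prop, not_not] using
    not_congr (forall_mem_GCIdx_iff (n := n) (p := fun i j => ¬p i j))

theorem lt_iff_lt_or_lt_of_le_of_le {α : Type*} [Preorder α] {a b c : α} (hab : a ≤ b)
    (hbc : b ≤ c) : a < c ↔ a < b ∨ b < c := by
  refine ⟨fun hac => ?_, fun h => h.elim (·.trans_le hbc) hab.trans_lt⟩
  by_cases hba : b ≤ a
  exacts [Or.inr (hba.trans_lt hac), Or.inl (lt_of_le_not_ge hab hba)]

/-- The edges on the two coordinate axes, up to distance `n` from the origin. -/
def axisEdges (n : ℕ) : Set GridEdge :=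
  {e | ∃ i < n, e = ((0, i), (0, i + 1)) ∨ e = ((i, 0), (i + 1, 0))}

/-- The edges corresponding to the defining inequalities of the Gelfand–Cetlin polytope that are
strict at `x`. Interior vertices are written `(a + 1, b + 1)` to avoid truncated subtraction. -/
def slackEdges (n : ℕ) (lam : ℕ → ℝ) (x : GCIdx n → ℝ) : Set GridEdge :=
  {e | ∃ a b, a + b + 2 ≤ n ∧
    (e = ((a, b + 1), (a + 1, b + 1)) ∧
        gcEntry n lam x (a + 1, b + 1) < gcEntry n lam x (a + 1, b + 2) ∨
      e = ((a + 1, b), (a + 1, b + 1)) ∧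
        gcEntry n lam x (a + 2, b + 1) < gcEntry n lam x (a + 1, b + 1))}

theorem eq_or_eq_of_gridStep_of_notMem_axisEdges {n : ℕ} {e : GridEdge}
    (hstep : gridStep e.1 e.2) (hle : e.2.1 + e.2.2 ≤ n) (he : e ∉ axisEdges n) :
    ∃ a b, a + b + 2 ≤ n ∧
      (e = ((a, b + 1), (a + 1, b + 1)) ∨ e = ((a + 1, b), (a + 1, b + 1))) := by
  obtain ⟨⟨a, b⟩, w⟩ := e
  obtain rfl | rfl : gridStep (a, b) w := hstep
  · obtain _ | b := b
    · exact absurd ⟨a, by simp only at hle; omega, Or.inr rfl⟩ he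
    · exact ⟨a, b, by simp only at hle; omega, Or.inl rfl⟩
  · obtain _ | a := a
    · exact absurd ⟨b, by simp only at hle; omega, Or.inl rfl⟩ he
    · exact ⟨a, b, by simp only at hle; omega, Or.inr rfl⟩

section Slack

variable {n : ℕ} {lam : ℕ → ℝ} {x : GCIdx n → ℝ} {a b : ℕ}

theorem gcEntry_of_lt (hab : n < a + b) : gcEntry n lam x (a, b) = lam a :=
  dif_neg fun h => hab.not_ge h.2.2

theorem mem_GCPoly_iff :
    x ∈ GCPoly n lam ↔ ∀ a b, a + b + 2 ≤ n →
      gcEntry n lam x (a + 1, b + 1) ≤ gcEntry n lam x (a + 1, b + 2) ∧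
        gcEntry n lam x (a + 2, b + 1) ≤ gcEntry n lam x (a + 1, b + 1) :=
  forall_mem_GCIdx_iff

theorem horizontal_mem_slackEdges_iff :
    ((a, b + 1), (a + 1, b + 1)) ∈ slackEdges n lam x ↔
      a + b + 2 ≤ n ∧ gcEntry n lam x (a + 1, b + 1) < gcEntry n lam x (a + 1, b + 2) := by
  constructor
  · rintro ⟨a, b, hab, ⟨he, hlt⟩ | ⟨he, -⟩⟩ <;> cases he
    exact ⟨hab, hlt⟩
  · exact fun ⟨hab, hlt⟩ => ⟨a, b, hab, Or.inl ⟨rfl, hlt⟩⟩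

theorem vertical_mem_slackEdges_iff :
    ((a + 1, b), (a + 1, b + 1)) ∈ slackEdges n lam x ↔
      a + b + 2 ≤ n ∧ gcEntry n lam x (a + 2, b + 1) < gcEntry n lam x (a + 1, b + 1) := by
  constructor
  · rintro ⟨a, b, hab, ⟨he, -⟩ | ⟨he, hlt⟩⟩ <;> cases he
    exact ⟨hab, hlt⟩
  · exact fun ⟨hab, hlt⟩ => ⟨a, b, hab, Or.inr ⟨rfl, hlt⟩⟩

theorem slackEdges_subset_iff {E : Set GridEdge} :
    slackEdges n lam x ⊆ E ↔ ∀ a b, a + b + 2 ≤ n →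
      (gcEntry n lam x (a + 1, b + 1) < gcEntry n lam x (a + 1, b + 2) →
          ((a, b + 1), (a + 1, b + 1)) ∈ E) ∧
        (gcEntry n lam x (a + 2, b + 1) < gcEntry n lam x (a + 1, b + 1) →
          ((a + 1, b), (a + 1, b + 1)) ∈ E) := by
  constructor
  · exact fun h a b hab => ⟨fun hlt => h (horizontal_mem_slackEdges_iff.2 ⟨hab, hlt⟩),
      fun hlt => h (vertical_mem_slackEdges_iff.2 ⟨hab, hlt⟩)⟩
  · rintro h _ ⟨a, b, hab, ⟨rfl, hlt⟩ | ⟨rfl, hlt⟩⟩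
    exacts [(h a b hab).1 hlt, (h a b hab).2 hlt]

theorem gridStep_of_mem_slackEdges {e : GridEdge} (he : e ∈ slackEdges n lam x) :
    gridStep e.1 e.2 := by
  obtain ⟨a, b, -, ⟨rfl, -⟩ | ⟨rfl, -⟩⟩ := he
  exacts [Or.inl rfl, Or.inr rfl]

theorem le_of_mem_slackEdges {e : GridEdge} (he : e ∈ slackEdges n lam x) :
    e.2.1 + e.2.2 ≤ n := by
  obtain ⟨a, b, hab, ⟨rfl, -⟩ | ⟨rfl, -⟩⟩ := he <;> simp only <;> omega

theorem disjoint_axisEdges_slackEdges : Disjoint (axisEdges n) (slackEdges n lam x) := by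
  refine Set.disjoint_left.2 ?_
  rintro _ ⟨i, -, rfl | rfl⟩ ⟨a, b, -, ⟨h, -⟩ | ⟨h, -⟩⟩ <;> simp at h

theorem exists_in_slackEdges_iff (hx : x ∈ GCPoly n lam) (hab : a + b + 2 ≤ n) :
    (∃ u, (u, (a + 1, b + 1)) ∈ slackEdges n lam x) ↔
      gcEntry n lam x (a + 2, b + 1) < gcEntry n lam x (a + 1, b + 2) := by
  obtain ⟨hH, hV⟩ := mem_GCPoly_iff.1 hx a b hab
  rw [exists_edge_into_iff fun _ => gridStep_of_mem_slackEdges, horizontal_mem_slackEdges_iff,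
    vertical_mem_slackEdges_iff, and_iff_right hab, and_iff_right hab,
    lt_iff_lt_or_lt_of_le_of_le hV hH, or_comm]

theorem exists_out_slackEdges_iff (hx : x ∈ GCPoly n lam) (hab : a + b + 3 ≤ n) :
    (∃ w, ((a + 1, b + 1), w) ∈ slackEdges n lam x) ↔
      gcEntry n lam x (a + 2, b + 1) < gcEntry n lam x (a + 1, b + 2) := by
  have hH := (mem_GCPoly_iff.1 hx (a + 1) b (by omega)).1
  have hV := (mem_GCPoly_iff.1 hx a (b + 1) (by omega)).2
  rw [exists_edge_out_iff fun _ => gridStep_of_mem_slackEdges, horizontal_mem_slackEdges_iff,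
    vertical_mem_slackEdges_iff, and_iff_right (by omega), and_iff_right (by omega),
    lt_iff_lt_or_lt_of_le_of_le hH hV]

end Slack

/-! ### The maps `φ` and `ψ` -/

section Correspondence

variable {n : ℕ} {lam : ℕ → ℝ} {F : Set (GCIdx n → ℝ)}

theorem phiE_eq (n : ℕ) (lam : ℕ → ℝ) (F : Set (GCIdx n → ℝ)) :
    phiE n lam F = axisEdges n ∪ ⋃ x ∈ F, slackEdges n lam x := by
  ext e
  simp only [phiE, axisEdges, slackEdges, exists_mem_GCIdx_iff, Nat.add_sub_cancel,
    Set.mem_union, Set.mem_ofPred_eq, Set.mem_iUnion, exists_prop]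
  refine or_congr_right ⟨?_, ?_⟩
  · rintro (⟨a, b, hab, he, x, hx, hlt⟩ | ⟨a, b, hab, he, x, hx, hlt⟩)
    exacts [⟨x, hx, a, b, hab, Or.inl ⟨he, hlt⟩⟩, ⟨x, hx, a, b, hab, Or.inr ⟨he, hlt⟩⟩]
  · rintro ⟨x, hx, a, b, hab, ⟨he, hlt⟩ | ⟨he, hlt⟩⟩
    exacts [Or.inl ⟨a, b, hab, he, x, hx, hlt⟩, Or.inr ⟨a, b, hab, he, x, hx, hlt⟩]

theorem mem_psiGC_iff {γ : LGraph} {x : GCIdx n → ℝ} :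
    x ∈ psiGC n lam γ ↔ x ∈ GCPoly n lam ∧ slackEdges n lam x ⊆ γ.E := by
  refine and_congr_right fun hx => ?_
  rw [slackEdges_subset_iff, forall_mem_GCIdx_iff]
  refine forall₃_congr fun a b hab => ?_
  obtain ⟨hH, hV⟩ := mem_GCPoly_iff.1 hx a b hab
  rw [not_imp_comm, not_imp_comm (b := gcEntry n lam x (a + 1, b + 1) = _)]
  exact and_congr (imp_congr_left hH.lt_iff_ne.symm) (imp_congr_left hV.lt_iff_ne'.symm)

theorem isGCFace_iff :
    IsGCFace n lam F ↔ F.Nonempty ∧ ∃ γ, F = psiGC n lam γ := by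
  refine and_congr_right fun _ => ⟨?_, ?_⟩
  · rintro ⟨SH, SV, hSH, hSV, rfl⟩
    let E : Set GridEdge :=
      ((fun p => ((p.1 - 1, p.2), p)) '' SH ∪ (fun p => ((p.1, p.2 - 1), p)) '' SV)ᶜ
    have hH {p : ℕ × ℕ} (hp : p ∈ GCIdx n) : ((p.1 - 1, p.2), p) ∉ E ↔ p ∈ SH := by
      grind [GCIdx]
    have hV {p : ℕ × ℕ} (hp : p ∈ GCIdx n) : ((p.1, p.2 - 1), p) ∉ E ↔ p ∈ SV := by
      grind [GCIdx]
    refine ⟨⟨∅, E⟩, Set.ext fun x => and_congr_right fun _ => ⟨fun h i j hij => ⟨?_, ?_⟩,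
      fun h => ⟨fun p hp => ?_, fun p hp => ?_⟩⟩⟩
    · exact fun he => (h.1 _ ((hH hij).1 he)).symm
    · exact fun he => h.2 _ ((hV hij).1 he)
    · exact ((h p.1 p.2 (hSH hp)).1 ((hH (hSH hp)).2 hp)).symm
    · exact (h p.1 p.2 (hSV hp)).2 ((hV (hSV hp)).2 hp)
  · rintro ⟨γ, rfl⟩
    refine ⟨{p ∈ GCIdx n | ((p.1 - 1, p.2), p) ∉ γ.E}, {p ∈ GCIdx n | ((p.1, p.2 - 1), p) ∉ γ.E},
      fun _ => And.left, fun _ => And.left,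
      Set.ext fun x => and_congr_right fun _ => ⟨fun h => ⟨?_, ?_⟩, fun h i j hij => ⟨?_, ?_⟩⟩⟩
    · exact fun p hp => ((h p.1 p.2 hp.1).1 hp.2).symm
    · exact fun p hp => (h p.1 p.2 hp.1).2 hp.2
    · exact fun he => (h.1 (i, j) ⟨hij, he⟩).symm
    · exact fun he => h.2 (i, j) ⟨hij, he⟩

theorem psiGC_phiGC_of_isGCFace (hF : IsGCFace n lam F) : psiGC n lam (phiGC n lam F) = F := by
  obtain ⟨-, γ, rfl⟩ := isGCFace_iff.1 hF
  ext x
  simp only [mem_psiGC_iff (x := x), phiGC, phiE_eq]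
  refine and_congr_right fun hx => ⟨fun h => ?_, fun h => ?_⟩
  · refine (disjoint_axisEdges_slackEdges.symm.subset_right_of_subset_union h).trans ?_
    exact Set.iUnion₂_subset fun y hy => (mem_psiGC_iff.1 hy).2
  · exact Set.subset_union_of_subset_right
      (Set.subset_biUnion_of_mem (u := slackEdges n lam) (mem_psiGC_iff.2 ⟨hx, h⟩)) _

theorem exists_in_phiE_iff (hFP : F ⊆ GCPoly n lam) {a b : ℕ} (hab : a + b + 2 ≤ n) :
    (∃ u, (u, (a + 1, b + 1)) ∈ phiE n lam F) ↔
      ∃ x ∈ F, gcEntry n lam x (a + 2, b + 1) < gcEntry n lam x (a + 1, b + 2) := by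
  have haxis (u : ℕ × ℕ) : (u, (a + 1, b + 1)) ∉ axisEdges n := by simp [axisEdges]
  simp only [phiE_eq, Set.mem_union, haxis, false_or, Set.mem_iUnion₂, exists_prop]
  rw [exists_comm]
  refine exists_congr fun x => ?_
  rw [exists_and_left]
  exact and_congr_right fun hx => exists_in_slackEdges_iff (hFP hx) hab

theorem exists_out_phiE_iff (hFP : F ⊆ GCPoly n lam) {a b : ℕ} (hab : a + b + 3 ≤ n) :
    (∃ w, ((a + 1, b + 1), w) ∈ phiE n lam F) ↔
      ∃ x ∈ F, gcEntry n lam x (a + 2, b + 1) < gcEntry n lam x (a + 1, b + 2) := by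
  have haxis (w : ℕ × ℕ) : ((a + 1, b + 1), w) ∉ axisEdges n := by simp [axisEdges]
  simp only [phiE_eq, Set.mem_union, haxis, false_or, Set.mem_iUnion₂, exists_prop]
  rw [exists_comm]
  refine exists_congr fun x => ?_
  rw [exists_and_left]
  exact and_congr_right fun hx => exists_out_slackEdges_iff (hFP hx) hab

theorem axisEdges_subset_phiE : axisEdges n ⊆ phiE n lam F := by
  rw [phiE_eq]
  exact Set.subset_union_left

theorem isBalanced_phiE (hn : 0 < n) (hF : F.Nonempty) (hFP : F ⊆ GCPoly n lam) :
    IsBalanced n (descents n lam) (phiE n lam F) where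
  step e he := by
    obtain ⟨i, -, rfl | rfl⟩ | he := (phiE_eq n lam F).subset he
    · exact Or.inr rfl
    · exact Or.inl rfl
    · obtain ⟨x, -, hx⟩ := Set.mem_iUnion₂.1 he
      exact gridStep_of_mem_slackEdges hx
  le e he := by
    obtain ⟨i, hi, rfl | rfl⟩ | he := (phiE_eq n lam F).subset he
    · simpa using hi
    · simpa using hi
    · obtain ⟨x, -, hx⟩ := Set.mem_iUnion₂.1 he
      exact le_of_mem_slackEdges hx
  in_iff_out := by
    rintro ⟨_ | a, _ | b⟩ hpos hlt <;> simp only at hpos hlt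
    · simp at hpos
    · exact iff_of_true ⟨_, axisEdges_subset_phiE ⟨b, by omega, Or.inl rfl⟩⟩
        ⟨_, axisEdges_subset_phiE ⟨b + 1, by omega, Or.inl rfl⟩⟩
    · exact iff_of_true ⟨_, axisEdges_subset_phiE ⟨a, by omega, Or.inr rfl⟩⟩
        ⟨_, axisEdges_subset_phiE ⟨a + 1, by omega, Or.inr rfl⟩⟩
    · rw [exists_in_phiE_iff hFP (by omega), exists_out_phiE_iff hFP (by omega)]
  in_iff_mem := by
    rintro ⟨_ | a, _ | b⟩ hv <;> simp only at hv
    · exact absurd hv hn.ne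
    · exact iff_of_true ⟨_, axisEdges_subset_phiE ⟨b, by omega, Or.inl rfl⟩⟩
        ⟨hv, Or.inl rfl⟩
    · exact iff_of_true ⟨_, axisEdges_subset_phiE ⟨a, by omega, Or.inr rfl⟩⟩
        ⟨hv, Or.inr (Or.inl rfl)⟩
    · have hbdry (x : GCIdx n → ℝ) :
          gcEntry n lam x (a + 2, b + 1) < gcEntry n lam x (a + 1, b + 2) ↔
            lam (a + 2) < lam (a + 1) := by
        rw [gcEntry_of_lt (by omega), gcEntry_of_lt (by omega)]
      rw [exists_in_phiE_iff hFP (by omega)]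
      simp only [hbdry, exists_and_right, ← Set.nonempty_def]
      simp [descents, hv, hF]

theorem IsBalanced.axisEdges_subset {E : Set GridEdge} (hE : IsBalanced n (descents n lam) E) :
    axisEdges n ⊆ E := by
  rintro _ ⟨i, hi, rfl | rfl⟩
  · refine hE.mem_of_unique_step (c := fun i => (0, i)) (fun i u h => ?_) (fun i => by simp)
      ⟨by simp, Or.inl rfl⟩ hi
    simpa [gridStep, Prod.ext_iff, eq_comm] using h
  · refine hE.mem_of_unique_step (c := fun i => (i, 0)) (fun i u h => ?_) (fun i => by simp)
      ⟨by simp, Or.inr (Or.inl rfl)⟩ hi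
    simpa [gridStep, Prod.ext_iff, eq_comm] using h

end Correspondence

/-! ### The point `x̄` -/

section BarX

variable {n : ℕ} {lam : ℕ → ℝ} {E : Set GridEdge}

theorem barX_of_lt {a b : ℕ} (hab : n < a + b) : barX n lam E a b = lam a := by
  rw [barX, dif_pos (show n + 1 ≤ a + b from hab)]

theorem barX_of_le {a b : ℕ} (hab : a + b + 2 ≤ n) :
    barX n lam E (a + 1) (b + 1) =
      if ((a, b + 1), (a + 1, b + 1)) ∈ E then
        if ((a + 1, b), (a + 1, b + 1)) ∈ E then
          (barX n lam E (a + 1) (b + 2) + barX n lam E (a + 2) (b + 1)) / 2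
        else barX n lam E (a + 2) (b + 1)
      else barX n lam E (a + 1) (b + 2) := by
  rw [barX, dif_neg (by omega)]
  rfl

theorem ite_ite_add_div_two_between {K : Type*} [Field K] [LinearOrder K] [IsStrictOrderedRing K]
    {p q : Prop} [Decidable p] [Decidable q] {l u : K} (hlu : l ≤ u) (hpq : l < u ↔ p ∨ q) :
    let m := if p then if q then (u + l) / 2 else l else u
    (m ≤ u ∧ (m < u ↔ p)) ∧ (l ≤ m ∧ (l < m ↔ q)) := by
  by_cases hp : p <;> by_cases hq : q <;> simp only [hp, hq, or_self, or_true, true_or,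
    iff_true, iff_false, not_lt, if_true, if_false, le_refl, lt_irrefl, true_and, and_true] at *
  · exact ⟨⟨by linarith, by linarith⟩, by linarith, by linarith⟩
  · exact ⟨hpq.le, hpq⟩
  · exact ⟨hpq.le, hpq⟩
  · exact ⟨hlu, hpq⟩

theorem barX_between_of_gap (hstep : ∀ e ∈ E, gridStep e.1 e.2) {a b : ℕ}
    (hab : a + b + 2 ≤ n)
    (hgap : barX n lam E (a + 2) (b + 1) ≤ barX n lam E (a + 1) (b + 2) ∧
      (barX n lam E (a + 2) (b + 1) < barX n lam E (a + 1) (b + 2) ↔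
        ∃ u, (u, (a + 1, b + 1)) ∈ E)) :
    (barX n lam E (a + 1) (b + 1) ≤ barX n lam E (a + 1) (b + 2) ∧
      (barX n lam E (a + 1) (b + 1) < barX n lam E (a + 1) (b + 2) ↔
        ((a, b + 1), (a + 1, b + 1)) ∈ E)) ∧
    (barX n lam E (a + 2) (b + 1) ≤ barX n lam E (a + 1) (b + 1) ∧
      (barX n lam E (a + 2) (b + 1) < barX n lam E (a + 1) (b + 1) ↔
        ((a + 1, b), (a + 1, b + 1)) ∈ E)) := by
  rw [exists_edge_into_iff hstep] at hgap
  rw [barX_of_le hab]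
  exact ite_ite_add_div_two_between hgap.1 hgap.2

theorem barX_gap (hlam : AntitoneOn lam (Set.Icc 1 n)) (hE : IsBalanced n (descents n lam) E)
    {a b : ℕ} (hab : a + b + 2 ≤ n) :
    barX n lam E (a + 2) (b + 1) ≤ barX n lam E (a + 1) (b + 2) ∧
      (barX n lam E (a + 2) (b + 1) < barX n lam E (a + 1) (b + 2) ↔
        ∃ u, (u, (a + 1, b + 1)) ∈ E) := by
  obtain hn | hlt := hab.eq_or_lt
  · rw [barX_of_lt (by omega), barX_of_lt (by omega), hE.in_iff_mem _ (by simp only; omega)]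
    refine ⟨hlam ⟨by omega, by omega⟩ ⟨by omega, by omega⟩ (by omega), ?_⟩
    exact ⟨fun hlt => ⟨by simp only; omega, Or.inr (Or.inr hlt)⟩, by simp [descents]⟩
  -- `x̄_{a+2,b+2}` separates the two entries, with gaps recorded by the edges out of the vertex.
  · obtain ⟨hU, hU'⟩ := (barX_between_of_gap hE.step (by omega)
      (barX_gap hlam hE (a := a) (b := b + 1) (by omega))).2
    obtain ⟨hL, hL'⟩ := (barX_between_of_gap hE.step (by omega)
      (barX_gap hlam hE (a := a + 1) (b := b) (by omega))).1
    refine ⟨hL.trans hU, ?_⟩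
    rw [lt_iff_lt_or_lt_of_le_of_le hL hU, hL', hU', ← exists_edge_out_iff hE.step,
      hE.in_iff_out _ (by simp only; omega) (by simp only; omega)]
termination_by n - (a + b)

/-- The point `x̄` of `P_λ` attached to an edge set, with entries `barX`. -/
noncomputable def barPoint (n : ℕ) (lam : ℕ → ℝ) (E : Set GridEdge) : GCIdx n → ℝ :=
  fun p => barX n lam E p.1.1 p.1.2

theorem gcEntry_barPoint {a b : ℕ} :
    gcEntry n lam (barPoint n lam E) (a + 1, b + 1) = barX n lam E (a + 1) (b + 1) := by
  by_cases hab : n < a + 1 + (b + 1)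
  · rw [gcEntry_of_lt hab, barX_of_lt hab]
  · exact dif_pos ⟨by simp, by simp, not_lt.1 hab⟩

theorem barPoint_mem_GCPoly (hlam : AntitoneOn lam (Set.Icc 1 n))
    (hE : IsBalanced n (descents n lam) E) : barPoint n lam E ∈ GCPoly n lam := by
  refine mem_GCPoly_iff.2 fun a b hab => ?_
  obtain ⟨⟨hH, -⟩, hV, -⟩ := barX_between_of_gap hE.step hab (barX_gap hlam hE hab)
  simp only [gcEntry_barPoint]
  exact ⟨hH, hV⟩

theorem slackEdges_barPoint (hlam : AntitoneOn lam (Set.Icc 1 n))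
    (hE : IsBalanced n (descents n lam) E) :
    slackEdges n lam (barPoint n lam E) = E \ axisEdges n := by
  have hslack {a b : ℕ} (hab : a + b + 2 ≤ n) :=
    barX_between_of_gap hE.step hab (barX_gap hlam hE hab)
  refine subset_antisymm (Set.subset_sdiff.2 ⟨?_, disjoint_axisEdges_slackEdges.symm⟩) ?_
  · refine slackEdges_subset_iff.2 fun a b hab => ?_
    simp only [gcEntry_barPoint]
    exact ⟨(hslack hab).1.2.1, (hslack hab).2.2.1⟩
  · rintro e ⟨he, heaxis⟩
    obtain ⟨a, b, hab, rfl | rfl⟩ :=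
      eq_or_eq_of_gridStep_of_notMem_axisEdges (hE.step e he) (hE.le e he) heaxis
    · rw [horizontal_mem_slackEdges_iff, gcEntry_barPoint, gcEntry_barPoint]
      exact ⟨hab, (hslack hab).1.2.2 he⟩
    · rw [vertical_mem_slackEdges_iff, gcEntry_barPoint, gcEntry_barPoint]
      exact ⟨hab, (hslack hab).2.2.2 he⟩

theorem barPoint_mem_psiGC (hlam : AntitoneOn lam (Set.Icc 1 n)) {γ : LGraph}
    (hγ : IsBalanced n (descents n lam) γ.E) : barPoint n lam γ.E ∈ psiGC n lam γ :=
  mem_psiGC_iff.2 ⟨barPoint_mem_GCPoly hlam hγ,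
    (slackEdges_barPoint hlam hγ).trans_subset Set.sdiff_subset⟩

theorem phiE_psiGC (hlam : AntitoneOn lam (Set.Icc 1 n)) {γ : LGraph}
    (hγ : IsBalanced n (descents n lam) γ.E) : phiE n lam (psiGC n lam γ) = γ.E := by
  rw [phiE_eq]
  refine subset_antisymm (Set.union_subset hγ.axisEdges_subset
    (Set.iUnion₂_subset fun x hx => (mem_psiGC_iff.1 hx).2)) (Set.sdiff_subset_iff.1 ?_)
  rw [← slackEdges_barPoint hlam hγ]
  exact Set.subset_biUnion_of_mem (u := slackEdges n lam) (barPoint_mem_psiGC hlam hγ)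

end BarX

/-- Lemma 2.6. The map `φ` from faces of the Gelfand–Cetlin
polytope `P_λ` to faces of the ladder diagram `Γ_k` is a bijection with
inverse `ψ`. -/
theorem phiGC_bijective (s : ℕ) (hs : 1 ≤ s) (k : ℕ → ℕ) (hk : ∀ i < s, 0 < k i)
    (lam : ℕ → ℝ) (hlam : HasBlockStructure s k lam) :
    (∀ F : Set (GCIdx (nseq k s) → ℝ), IsGCFace (nseq k s) lam F →
      IsLadderFace s k (phiGC (nseq k s) lam F) ∧
      psiGC (nseq k s) lam (phiGC (nseq k s) lam F) = F) ∧
    (∀ γ : LGraph, IsLadderFace s k γ →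
      IsGCFace (nseq k s) lam (psiGC (nseq k s) lam γ) ∧
      phiGC (nseq k s) lam (psiGC (nseq k s) lam γ) = γ) := by
  have hn := nseq_pos hs hk
  refine ⟨fun F hF => ⟨(isLadderFace_iff hn).2 ⟨rfl, ?_⟩, psiGC_phiGC_of_isGCFace hF⟩,
    fun γ hγ => ?_⟩
  · obtain ⟨hne, SH, SV, -, -, rfl⟩ := hF
    rw [hlam.terminals_eq_descents]
    exact isBalanced_phiE hn hne fun x hx => hx.1
  · obtain ⟨hV, hE⟩ := (isLadderFace_iff hn).1 hγ
    rw [hlam.terminals_eq_descents] at hE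
    have hφψ := phiE_psiGC hlam.antitoneOn hE
    exact ⟨isGCFace_iff.2 ⟨⟨_, barPoint_mem_psiGC hlam.antitoneOn hE⟩, γ, rfl⟩,
      LGraph.ext ((congrArg endpoints hφψ).trans hV.symm) hφψ⟩
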